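/- arXiv:1712.04150 — 3 statements merged into one kernel-verified Lean document; each statement's English description precedes it below -/
import Mathlib

section
/- Let d = 2 or d = 3, let Δt > 0 and L ≥ 0 satisfy Δt·L ≤ 1/4, let w : ℝ^d → ℝ^d be differentiable at a point x with the Frobenius norm of its Jacobian matrix at x at most L, and let X₁(w)(x) = x − Δt·w(x). Then X₁(w) is differentiable at x and the determinant of its derivative at x (that is, the determinant of the linear map v ↦ v − Δt·(Dw(x))(v)) satisfies 1/2 ≤ det(D(X₁(w))(x)) ≤ 3/2. -/
/-- The Frobenius norm of the Jacobian matrix of `f` at `x`. -/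
noncomputable def jacobianFrobeniusNorm {d m : ℕ}
    (f : EuclideanSpace ℝ (Fin d) → EuclideanSpace ℝ (Fin m))
    (x : EuclideanSpace ℝ (Fin d)) : ℝ :=
  Real.sqrt (∑ i, ∑ j, (fderiv ℝ f x (EuclideanSpace.single j (1 : ℝ)) i) ^ 2)

/-! Applying AM-GM to the eigenvalues of `Aᴴ * A` gives `‖det A‖ ≤ (‖A‖ / √n) ^ n` for the Frobenius
norm. Since `‖1‖ = √n`, this bounds `det (1 - B)` above by `(1 + ‖B‖ / √n) ^ n`. The inverse of
`1 - B` is `1 + C` with `‖C‖ ≤ ‖B‖ / (1 - ‖B‖)` by the Neumann series, so the same estimate for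
`1 + C` bounds `|det (1 - B)|` below; the sign is positive because `1 - t • B` stays invertible for
`0 ≤ t ≤ 1`. -/

open Matrix
open scoped ComplexOrder Matrix.Norms.Frobenius

theorem prod_le_sum_div_card_pow {ι : Type*} (s : Finset ι) {z : ι → ℝ}
    (hz : ∀ i ∈ s, 0 ≤ z i) : ∏ i ∈ s, z i ≤ ((∑ i ∈ s, z i) / s.card) ^ s.card := by
  obtain rfl | hs := s.eq_empty_or_nonempty
  · simp
  · have hmean : (∏ i ∈ s, z i) ^ (s.card : ℝ)⁻¹ ≤ (∑ i ∈ s, z i) / s.card := by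
      simpa using Real.geom_mean_le_arith_mean s (fun _ => 1) z (fun _ _ => zero_le_one)
        (by simpa using hs) hz
    have hprod : 0 ≤ ∏ i ∈ s, z i := Finset.prod_nonneg hz
    calc ∏ i ∈ s, z i = ((∏ i ∈ s, z i) ^ (s.card : ℝ)⁻¹) ^ s.card :=
          (Real.rpow_inv_natCast_pow hprod hs.card_ne_zero).symm
      _ ≤ ((∑ i ∈ s, z i) / s.card) ^ s.card := by gcongr

theorem exists_one_sub_mul_one_add_eq_one {R : Type*} [NormedRing R] [HasSummableGeomSeries R]
    {x : R} (hx : ‖x‖ < 1) : ∃ y : R, ‖y‖ ≤ ‖x‖ / (1 - ‖x‖) ∧ (1 - x) * (1 + y) = 1 := by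
  refine ⟨∑' i : ℕ, x ^ (i + 1), ?_, ?_⟩
  · refine tsum_of_norm_bounded ((hasSum_geometric_of_lt_one (norm_nonneg x) hx).mul_left ‖x‖)
      fun i => ?_
    rw [← pow_succ']
    exact norm_pow_le' x i.succ_pos
  · rw [geom_series_succ x hx, add_sub_cancel, mul_neg_geom_series x hx]

section FrobeniusNorm

theorem frobenius_norm_sq_eq_sum {m n α : Type*} [Fintype m] [Fintype n]
    [SeminormedAddCommGroup α] (A : Matrix m n α) : ‖A‖ ^ 2 = ∑ i, ∑ j, ‖A i j‖ ^ 2 := by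
  rw [frobenius_norm_def, ← Real.sqrt_eq_rpow, Real.sq_sqrt (by positivity)]
  simp only [Real.rpow_two]

theorem frobenius_norm_one {n α : Type*} [Fintype n] [DecidableEq n] [SeminormedAddCommGroup α]
    [One α] [NormOneClass α] : ‖(1 : Matrix n n α)‖ = √(Fintype.card n) := by
  simpa using congrArg NNReal.toReal (frobenius_nnnorm_one (n := n) (α := α))

variable {n 𝕜 : Type*} [Fintype n] [RCLike 𝕜]

theorem frobenius_norm_sq_eq_re_trace {m : Type*} [Fintype m] (A : Matrix m n 𝕜) :
    ‖A‖ ^ 2 = RCLike.re (Aᴴ * A).trace := by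
  rw [frobenius_norm_sq_eq_sum, Finset.sum_comm]
  simp only [trace, diag_apply, mul_apply, conjTranspose_apply, RCLike.star_def, RCLike.conj_mul,
    ← RCLike.ofReal_pow, map_sum, RCLike.ofReal_re]

variable [DecidableEq n]

theorem re_det_le_re_trace_div_card_pow {A : Matrix n n 𝕜} (hA : A.PosSemidef) :
    RCLike.re A.det ≤ (RCLike.re A.trace / Fintype.card n) ^ Fintype.card n := by
  rw [hA.isHermitian.det_eq_prod_eigenvalues, hA.isHermitian.trace_eq_sum_eigenvalues,
    ← RCLike.ofReal_prod, ← RCLike.ofReal_sum, RCLike.ofReal_re, RCLike.ofReal_re]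
  exact prod_le_sum_div_card_pow Finset.univ fun i _ => hA.eigenvalues_nonneg i

theorem norm_det_le_frobenius_norm_div_sqrt_pow (A : Matrix n n 𝕜) :
    ‖A.det‖ ≤ (‖A‖ / √(Fintype.card n)) ^ Fintype.card n := by
  refine le_of_sq_le_sq ?_ (by positivity)
  calc ‖A.det‖ ^ 2 = RCLike.re (Aᴴ * A).det := by
        rw [det_mul, det_conjTranspose, RCLike.star_def, RCLike.conj_mul, ← RCLike.ofReal_pow,
          RCLike.ofReal_re]
    _ ≤ (RCLike.re (Aᴴ * A).trace / Fintype.card n) ^ Fintype.card n :=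
        re_det_le_re_trace_div_card_pow (posSemidef_conjTranspose_mul_self A)
    _ = ((‖A‖ / √(Fintype.card n)) ^ Fintype.card n) ^ 2 := by
        rw [← frobenius_norm_sq_eq_re_trace, pow_right_comm, div_pow ‖A‖,
          Real.sq_sqrt (Nat.cast_nonneg _)]

theorem norm_det_one_add_le {B : Matrix n n 𝕜} {r : ℝ} (hB : ‖B‖ ≤ r) :
    ‖(1 + B).det‖ ≤ (1 + r / √(Fintype.card n)) ^ Fintype.card n := by
  cases isEmpty_or_nonempty n
  · simp
  · have hcard : (0 : ℝ) < √(Fintype.card n) := by simp [Fintype.card_pos]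
    calc ‖(1 + B).det‖ ≤ (‖1 + B‖ / √(Fintype.card n)) ^ Fintype.card n :=
          norm_det_le_frobenius_norm_div_sqrt_pow _
      _ ≤ ((√(Fintype.card n) + r) / √(Fintype.card n)) ^ Fintype.card n := by
          gcongr
          exact norm_add_le_of_le frobenius_norm_one.le hB
      _ = (1 + r / √(Fintype.card n)) ^ Fintype.card n := by
          rw [add_div, div_self hcard.ne']

theorem norm_det_one_sub_le {B : Matrix n n 𝕜} {r : ℝ} (hB : ‖B‖ ≤ r) :
    ‖(1 - B).det‖ ≤ (1 + r / √(Fintype.card n)) ^ Fintype.card n := by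
  rw [sub_eq_add_neg]
  exact norm_det_one_add_le ((norm_neg B).trans_le hB)

theorem one_le_norm_det_one_sub_mul {B : Matrix n n 𝕜} {r : ℝ} (hB : ‖B‖ ≤ r) (hr : r < 1) :
    1 ≤ ‖(1 - B).det‖ * (1 + r / (1 - r) / √(Fintype.card n)) ^ Fintype.card n := by
  have := FiniteDimensional.complete 𝕜 (Matrix n n 𝕜)
  have hr₀ : 0 ≤ r := (norm_nonneg B).trans hB
  obtain ⟨C, hC, hC_inv⟩ := exists_one_sub_mul_one_add_eq_one (hB.trans_lt hr)
  have hC_norm : ‖C‖ ≤ r / (1 - r) := hC.trans (by gcongr)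
  calc 1 = ‖(1 - B).det‖ * ‖(1 + C).det‖ := by rw [← norm_mul, ← det_mul, hC_inv, det_one, norm_one]
    _ ≤ _ := by gcongr; exact norm_det_one_add_le hC_norm

theorem det_one_sub_ne_zero {B : Matrix n n 𝕜} (hB : ‖B‖ < 1) : (1 - B).det ≠ 0 := by
  have := FiniteDimensional.complete 𝕜 (Matrix n n 𝕜)
  exact ((isUnit_iff_isUnit_det _).1 (isUnit_one_sub_of_norm_lt_one hB)).ne_zero

theorem det_one_sub_pos {B : Matrix n n ℝ} (hB : ‖B‖ < 1) : 0 < (1 - B).det := by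
  have hpath : ContinuousOn (fun t : ℝ => (1 - t • B).det) (Set.Icc 0 1) := by fun_prop
  have hne (t : ℝ) (ht : t ∈ Set.Icc (0 : ℝ) 1) : (1 - t • B).det ≠ 0 := by
    refine det_one_sub_ne_zero ?_
    rw [norm_smul, Real.norm_of_nonneg ht.1]
    exact (mul_le_of_le_one_left (norm_nonneg B) ht.2).trans_lt hB
  simpa using isPreconnected_Icc.lt_of_ne hpath hne ⟨0, by simp⟩ (Set.right_mem_Icc.2 zero_le_one)

theorem det_one_sub_bounds {B : Matrix n n ℝ} {r : ℝ} (hB : ‖B‖ ≤ r) (hr : r < 1) :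
    ((1 + r / (1 - r) / √(Fintype.card n)) ^ Fintype.card n)⁻¹ ≤ (1 - B).det ∧
      (1 - B).det ≤ (1 + r / √(Fintype.card n)) ^ Fintype.card n := by
  have hr₀ : 0 ≤ r := (norm_nonneg B).trans hB
  have : 0 < 1 - r := sub_pos.2 hr
  have hdet : ‖(1 - B).det‖ = (1 - B).det :=
    Real.norm_of_nonneg (det_one_sub_pos (hB.trans_lt hr)).le
  rw [← hdet]
  exact ⟨(inv_le_iff_one_le_mul₀ (by positivity)).2 (one_le_norm_det_one_sub_mul hB hr),
    norm_det_one_sub_le hB⟩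

end FrobeniusNorm

/-- The Jacobian matrix of `f` at `x` in the standard bases; it is zero where `f` is not
differentiable. It turns determinants of derivatives into determinants of matrices. -/
noncomputable def jacobianMatrix {d m : ℕ}
    (f : EuclideanSpace ℝ (Fin d) → EuclideanSpace ℝ (Fin m))
    (x : EuclideanSpace ℝ (Fin d)) : Matrix (Fin m) (Fin d) ℝ :=
  LinearMap.toMatrix (EuclideanSpace.basisFun (Fin d) ℝ).toBasis
    (EuclideanSpace.basisFun (Fin m) ℝ).toBasis (fderiv ℝ f x).toLinearMap

theorem norm_jacobianMatrix {d m : ℕ}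
    (f : EuclideanSpace ℝ (Fin d) → EuclideanSpace ℝ (Fin m))
    (x : EuclideanSpace ℝ (Fin d)) : ‖jacobianMatrix f x‖ = jacobianFrobeniusNorm f x := by
  rw [jacobianFrobeniusNorm, ← Real.sqrt_sq (norm_nonneg _), frobenius_norm_sq_eq_sum]
  simp [jacobianMatrix, LinearMap.toMatrix_apply]

theorem one_add_div_sqrt_pow_le {d : ℕ} {c s : ℝ} (hc : 0 ≤ c) (hs : 0 < s) (hsd : s ^ 2 ≤ d) :
    (1 + c / √d) ^ d ≤ (1 + c / s) ^ d := by
  gcongr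
  exact Real.le_sqrt_of_sq_le hsd

theorem one_add_quarter_div_sqrt_pow_le {d : ℕ} (hd : d ≤ 3) :
    (1 + 1 / 4 / √d) ^ d ≤ (3 / 2 : ℝ) := by
  interval_cases d
  · norm_num
  · norm_num
  · exact (one_add_div_sqrt_pow_le (s := 1.4) (by norm_num) (by norm_num) (by norm_num)).trans
      (by norm_num)
  · exact (one_add_div_sqrt_pow_le (s := 1.73) (by norm_num) (by norm_num) (by norm_num)).trans
      (by norm_num)

theorem one_add_third_div_sqrt_pow_le {d : ℕ} (hd : d ≤ 3) :
    (1 + 1 / 3 / √d) ^ d ≤ (2 : ℝ) := by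
  interval_cases d
  · norm_num
  · norm_num
  · exact (one_add_div_sqrt_pow_le (s := 1.4) (by norm_num) (by norm_num) (by norm_num)).trans
      (by norm_num)
  · exact (one_add_div_sqrt_pow_le (s := 1.7) (by norm_num) (by norm_num) (by norm_num)).trans
      (by norm_num)

section Perturbation

variable {d : ℕ} {w : EuclideanSpace ℝ (Fin d) → EuclideanSpace ℝ (Fin d)}
  {x : EuclideanSpace ℝ (Fin d)}

theorem det_fderiv_id_sub_smul (Δt : ℝ) (hw : DifferentiableAt ℝ w x) :
    LinearMap.det (fderiv ℝ (fun y => y - Δt • w y) x).toLinearMap =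
      (1 - Δt • jacobianMatrix w x).det := by
  have hfderiv : fderiv ℝ (fun y => y - Δt • w y) x =
      ContinuousLinearMap.id ℝ _ - Δt • fderiv ℝ w x :=
    ((hasFDerivAt_id x).sub (hw.hasFDerivAt.const_smul Δt)).fderiv
  rw [hfderiv, ← LinearMap.det_toMatrix (EuclideanSpace.basisFun (Fin d) ℝ).toBasis,
    ContinuousLinearMap.toLinearMap_sub, map_sub, ContinuousLinearMap.toLinearMap_smul, map_smul,
    ContinuousLinearMap.coe_id, LinearMap.toMatrix_id, jacobianMatrix]

theorem det_fderiv_id_sub_smul_bounds {Δt r : ℝ} (hw : DifferentiableAt ℝ w x)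
    (hJ : |Δt| * jacobianFrobeniusNorm w x ≤ r) (hr : r < 1) :
    DifferentiableAt ℝ (fun y => y - Δt • w y) x ∧
      ((1 + r / (1 - r) / √d) ^ d)⁻¹ ≤
        LinearMap.det (fderiv ℝ (fun y => y - Δt • w y) x).toLinearMap ∧
      LinearMap.det (fderiv ℝ (fun y => y - Δt • w y) x).toLinearMap ≤ (1 + r / √d) ^ d := by
  have hB : ‖Δt • jacobianMatrix w x‖ ≤ r := by
    rwa [norm_smul, norm_jacobianMatrix, Real.norm_eq_abs]
  refine ⟨differentiableAt_id.sub (hw.const_smul Δt), ?_⟩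
  simpa only [det_fderiv_id_sub_smul Δt hw, Fintype.card_fin] using det_one_sub_bounds hB hr

theorem jacobian_det_bounds_general (hd : d ≤ 3) {Δt L : ℝ} (hΔtL : |Δt| * L ≤ 1 / 4)
    (hw : DifferentiableAt ℝ w x) (hJ : jacobianFrobeniusNorm w x ≤ L) :
    DifferentiableAt ℝ (fun y => y - Δt • w y) x ∧
      1 / 2 ≤ LinearMap.det (fderiv ℝ (fun y => y - Δt • w y) x).toLinearMap ∧
      LinearMap.det (fderiv ℝ (fun y => y - Δt • w y) x).toLinearMap ≤ 3 / 2 := by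
  have hB : |Δt| * jacobianFrobeniusNorm w x ≤ 1 / 4 :=
    (mul_le_mul_of_nonneg_left hJ (abs_nonneg Δt)).trans hΔtL
  obtain ⟨hdiff, hlower, hupper⟩ := det_fderiv_id_sub_smul_bounds hw hB (by norm_num)
  refine ⟨hdiff, ?_, hupper.trans (one_add_quarter_div_sqrt_pow_le hd)⟩
  calc (1 / 2 : ℝ) ≤ ((1 + 1 / 3 / √d) ^ d)⁻¹ := by
        rw [one_div]
        gcongr
        exact one_add_third_div_sqrt_pow_le hd
    _ = ((1 + 1 / 4 / (1 - 1 / 4) / √d) ^ d)⁻¹ := by norm_num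
    _ ≤ _ := hlower

end Perturbation

/-- If `Δt·L ≤ 1/4` and the Jacobian of `w` at `x` has Frobenius norm at most `L`,
then `X₁(w) : x ↦ x - Δt·w(x)` is differentiable at `x` and the determinant of its
derivative there lies in `[1/2, 3/2]`. -/
theorem jacobian_det_bounds (d : ℕ) (hd : d = 2 ∨ d = 3)
    (Δt L : ℝ) (hΔt : 0 < Δt) (hL : 0 ≤ L) (hΔtL : Δt * L ≤ 1 / 4)
    (w : EuclideanSpace ℝ (Fin d) → EuclideanSpace ℝ (Fin d))
    (x : EuclideanSpace ℝ (Fin d))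
    (hw : DifferentiableAt ℝ w x)
    (hJ : jacobianFrobeniusNorm w x ≤ L) :
    DifferentiableAt ℝ (fun y => y - Δt • w y) x ∧
      1 / 2 ≤ LinearMap.det (fderiv ℝ (fun y => y - Δt • w y) x).toLinearMap ∧
      LinearMap.det (fderiv ℝ (fun y => y - Δt • w y) x).toLinearMap ≤ 3 / 2 := by
  exact jacobian_det_bounds_general (by lia) (by rwa [abs_of_pos hΔt]) hw hJ
end

section
/- Let d = 2 or d = 3, let Δt > 0 and L ≥ 0 satisfy Δt·L ≤ 1/4, and let w : ℝ^d → ℝ^d be everywhere differentiable with the Frobenius norm of its Jacobian matrix at every point at most L. Then for every measurable function g : ℝ^d → [0, ∞], one has ∫_{ℝ^d} g(x − Δt·w(x)) dx ≤ 2·∫_{ℝ^d} g(y) dy, where the integrals are taken with respect to Lebesgue measure. -/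
open MeasureTheory

/-!
Put `A = Δt • Dw(x)`, and let `v₁, …, v_d` be an orthonormal eigenbasis of `(1 - A)ᵀ(1 - A)`. The
vectors `(1 - A) vᵢ` are orthogonal, so `|det (1 - A)| = ∏ ‖(1 - A) vᵢ‖ ≥ 1 - ∑ ‖A vᵢ‖`, and by
Cauchy–Schwarz `∑ ‖A vᵢ‖ ≤ √d ‖A‖` in the Hilbert–Schmidt norm. The same quantity `√d ‖A‖` dominates
the operator norm of `A`. If it stays below `1`, then `x ↦ x - Δt • w x` is injective, and changing
variables costs a factor of at most `(1 - √d Δt L)⁻¹`. For `Δt L ≤ 1/4` and `d ≤ 4` this is at most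
`2`.
-/

open Module (finrank)
open scoped ENNReal NNReal InnerProductSpace

theorem one_sub_sum_le_prod {ι R : Type*} [CommRing R] [LinearOrder R] [IsStrictOrderedRing R]
    (s : Finset ι) {a c : ι → R} (ha : ∀ i ∈ s, 0 ≤ a i) (hc : ∀ i ∈ s, 0 ≤ c i)
    (hac : ∀ i ∈ s, 1 - a i ≤ c i) : 1 - ∑ i ∈ s, a i ≤ ∏ i ∈ s, c i := by
  induction s using Finset.cons_induction with
  | empty => simp
  | cons j s hj ih =>
    simp only [Finset.forall_mem_cons] at ha hc hac
    have hsum : 0 ≤ ∑ i ∈ s, a i := Finset.sum_nonneg ha.2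
    have hprod : 0 ≤ ∏ i ∈ s, c i := Finset.prod_nonneg hc.2
    rw [Finset.sum_cons, Finset.prod_cons]
    rcases le_total 1 (a j) with h | h
    · calc 1 - (a j + ∑ i ∈ s, a i) ≤ 0 := by linarith
        _ ≤ c j * ∏ i ∈ s, c i := mul_nonneg hc.1 hprod
    · calc 1 - (a j + ∑ i ∈ s, a i) ≤ (1 - a j) * (1 - ∑ i ∈ s, a i) := by
            linarith [mul_nonneg ha.1 hsum]
        _ ≤ (1 - a j) * ∏ i ∈ s, c i :=
            mul_le_mul_of_nonneg_left (ih ha.2 hc.2 hac.2) (sub_nonneg.2 h)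
        _ ≤ c j * ∏ i ∈ s, c i := mul_le_mul_of_nonneg_right hac.1 hprod

section HilbertSchmidt

variable {𝕜 E F ι : Type*} [RCLike 𝕜] [Fintype ι]
  [NormedAddCommGroup E] [InnerProductSpace 𝕜 E]
  [NormedAddCommGroup F] [InnerProductSpace 𝕜 F]

theorem norm_apply_le_sum_norm_apply_mul (A : E →ₗ[𝕜] F) (b : OrthonormalBasis ι 𝕜 E) (x : E) :
    ‖A x‖ ≤ (∑ i, ‖A (b i)‖) * ‖x‖ := by
  calc ‖A x‖ = ‖∑ i, ⟪b i, x⟫_𝕜 • A (b i)‖ := by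
        conv_lhs => rw [← b.sum_repr' x, map_sum]
        simp only [map_smul]
    _ ≤ ∑ i, ‖A (b i)‖ * ‖x‖ := norm_sum_le_of_le _ fun i _ ↦ by
        rw [norm_smul, mul_comm]
        gcongr
        simpa only [b.norm_eq_one, one_mul] using norm_inner_le_norm (𝕜 := 𝕜) (b i) x
    _ = (∑ i, ‖A (b i)‖) * ‖x‖ := (Finset.sum_mul ..).symm

variable [FiniteDimensional 𝕜 E] [FiniteDimensional 𝕜 F]

/-- The Hilbert–Schmidt norm of a linear map between finite-dimensional inner product spaces: the
coordinate-free form of the Frobenius norm. It is defined through the trace of `A† A` so that no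
basis has to be chosen. -/
noncomputable def hilbertSchmidtNorm (A : E →ₗ[𝕜] F) : ℝ :=
  √(RCLike.re (LinearMap.trace 𝕜 E (A.adjoint ∘ₗ A)))

theorem hilbertSchmidtNorm_eq_sqrt_sum (A : E →ₗ[𝕜] F) (b : OrthonormalBasis ι 𝕜 E) :
    hilbertSchmidtNorm A = √(∑ i, ‖A (b i)‖ ^ 2) := by
  simp only [hilbertSchmidtNorm, LinearMap.trace_eq_sum_inner _ b, LinearMap.comp_apply,
    LinearMap.adjoint_inner_right, map_sum, inner_self_eq_norm_sq]

theorem hilbertSchmidtNorm_smul (c : 𝕜) (A : E →ₗ[𝕜] F) :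
    hilbertSchmidtNorm (c • A) = ‖c‖ * hilbertSchmidtNorm A := by
  simp only [hilbertSchmidtNorm_eq_sqrt_sum _ (stdOrthonormalBasis 𝕜 E), LinearMap.smul_apply,
    norm_smul, mul_pow, ← Finset.mul_sum, Real.sqrt_mul (sq_nonneg _), Real.sqrt_sq (norm_nonneg _)]

theorem sum_norm_apply_le_sqrt_finrank_mul_hilbertSchmidtNorm (A : E →ₗ[𝕜] F)
    (b : OrthonormalBasis ι 𝕜 E) :
    ∑ i, ‖A (b i)‖ ≤ √(finrank 𝕜 E) * hilbertSchmidtNorm A := by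
  rw [hilbertSchmidtNorm_eq_sqrt_sum A b, ← Real.sqrt_mul (Nat.cast_nonneg _),
    Module.finrank_eq_card_basis b.toBasis]
  exact Real.le_sqrt_of_sq_le sq_sum_le_card_mul_sum_sq

theorem norm_le_sqrt_finrank_mul_hilbertSchmidtNorm (A : E →L[𝕜] F) :
    ‖A‖ ≤ √(finrank 𝕜 E) * hilbertSchmidtNorm (A : E →ₗ[𝕜] F) :=
  let b := stdOrthonormalBasis 𝕜 E
  (A.opNorm_le_bound (by positivity) (norm_apply_le_sum_norm_apply_mul (A : E →ₗ[𝕜] F) b)).trans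
    (sum_norm_apply_le_sqrt_finrank_mul_hilbertSchmidtNorm (A : E →ₗ[𝕜] F) b)

theorem exists_orthonormalBasis_norm_det_eq_prod_norm_apply (B : E →ₗ[𝕜] E) :
    ∃ b : OrthonormalBasis (Fin (finrank 𝕜 E)) 𝕜 E, ‖B.det‖ = ∏ i, ‖B (b i)‖ := by
  have hsymm := B.isSymmetric_adjoint_comp_self
  let b := hsymm.eigenvectorBasis rfl
  have heigenvalue (i) : hsymm.eigenvalues rfl i = ‖B (b i)‖ ^ 2 := by
    rw [← RCLike.ofReal_inj (K := 𝕜)]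
    have h : ⟪b i, (B.adjoint ∘ₗ B) (b i)⟫_𝕜 = hsymm.eigenvalues rfl i := by
      rw [hsymm.apply_eigenvectorBasis, inner_smul_right, b.inner_eq_one, mul_one]
    rw [← h, LinearMap.comp_apply, LinearMap.adjoint_inner_right, inner_self_eq_norm_sq_to_K,
      RCLike.ofReal_pow]
  refine ⟨b, (sq_eq_sq₀ (norm_nonneg _) (by positivity)).1 ?_⟩
  rw [← RCLike.ofReal_inj (K := 𝕜), ← LinearMap.normDet_eq_norm_det, LinearMap.normDet_sq,
    hsymm.det_eq_prod_eigenvalues rfl]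
  simp only [heigenvalue, Finset.prod_pow, RCLike.ofReal_pow, RCLike.ofReal_prod]

theorem one_sub_sqrt_finrank_mul_hilbertSchmidtNorm_le_norm_det (A : E →ₗ[𝕜] E) :
    1 - √(finrank 𝕜 E) * hilbertSchmidtNorm A ≤
      ‖LinearMap.det (LinearMap.id - A : E →ₗ[𝕜] E)‖ := by
  obtain ⟨b, hdet⟩ := exists_orthonormalBasis_norm_det_eq_prod_norm_apply (LinearMap.id - A)
  have hsub (i) : 1 - ‖A (b i)‖ ≤ ‖(LinearMap.id - A : E →ₗ[𝕜] E) (b i)‖ :=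
    b.norm_eq_one i ▸ norm_sub_norm_le (b i) (A (b i))
  calc 1 - √(finrank 𝕜 E) * hilbertSchmidtNorm A ≤ 1 - ∑ i, ‖A (b i)‖ :=
        sub_le_sub_left (sum_norm_apply_le_sqrt_finrank_mul_hilbertSchmidtNorm A b) 1
    _ ≤ ∏ i, ‖(LinearMap.id - A : E →ₗ[𝕜] E) (b i)‖ :=
        one_sub_sum_le_prod _ (fun _ _ ↦ norm_nonneg _) (fun _ _ ↦ norm_nonneg _) fun i _ ↦ hsub i
    _ = ‖LinearMap.det (LinearMap.id - A : E →ₗ[𝕜] E)‖ := hdet.symm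

end HilbertSchmidt

theorem injective_id_sub_of_norm_fderiv_le {E : Type*} [NormedAddCommGroup E] [NormedSpace ℝ E]
    {u : E → E} {K : ℝ} (hK : K < 1) (hu : Differentiable ℝ u) (hbound : ∀ x, ‖fderiv ℝ u x‖ ≤ K) :
    Function.Injective fun x ↦ x - u x := by
  have hK₀ : 0 ≤ K := (norm_nonneg _).trans (hbound 0)
  have hlip : LipschitzWith ⟨K, hK₀⟩ u := lipschitzWith_of_nnnorm_fderiv_le hu hbound
  simpa only [sub_eq_add_neg, Pi.neg_apply, id] using
    (AntilipschitzWith.id.add_lipschitzWith hlip.neg (by simpa [← NNReal.coe_lt_coe])).injective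

section ChangeOfVariables

variable {E : Type*} [NormedAddCommGroup E] [MeasurableSpace E] [BorelSpace E]

theorem ofReal_mul_setLIntegral_comp_le_setLIntegral_image [NormedSpace ℝ E] [FiniteDimensional ℝ E]
    (μ : Measure E) [μ.IsAddHaarMeasure] {s : Set E} (hs : MeasurableSet s) {f : E → E}
    {f' : E → E →L[ℝ] E} (hf' : ∀ x ∈ s, HasFDerivWithinAt f (f' x) s x) (hf : Set.InjOn f s)
    {c : ℝ} (hdet : ∀ x ∈ s, c ≤ |(f' x).det|) (g : E → ℝ≥0∞) :
    ENNReal.ofReal c * ∫⁻ x in s, g (f x) ∂μ ≤ ∫⁻ y in f '' s, g y ∂μ := by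
  rw [lintegral_image_eq_lintegral_abs_det_fderiv_mul μ hs hf' hf,
    ← lintegral_const_mul' _ _ ENNReal.ofReal_ne_top]
  refine setLIntegral_mono' hs fun x hx ↦ ?_
  gcongr
  exact hdet x hx

theorem lintegral_comp_characteristic_le_general [InnerProductSpace ℝ E] [FiniteDimensional ℝ E]
    (μ : Measure E) [μ.IsAddHaarMeasure] {Δt L : ℝ} (hΔtL : √(finrank ℝ E) * (|Δt| * L) < 1)
    {w : E → E} (hw : Differentiable ℝ w)
    (hJ : ∀ x, hilbertSchmidtNorm (fderiv ℝ w x : E →ₗ[ℝ] E) ≤ L) (g : E → ℝ≥0∞) :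
    ∫⁻ x, g (x - Δt • w x) ∂μ ≤
      ENNReal.ofReal (1 - √(finrank ℝ E) * (|Δt| * L))⁻¹ * ∫⁻ y, g y ∂μ := by
  have hderiv (x) : HasFDerivAt (fun x ↦ Δt • w x) (Δt • fderiv ℝ w x) x :=
    (hw x).hasFDerivAt.const_smul Δt
  have hHS (x) : √(finrank ℝ E) * hilbertSchmidtNorm ((Δt • fderiv ℝ w x : E →L[ℝ] E) : E →ₗ[ℝ] E)
      ≤ √(finrank ℝ E) * (|Δt| * L) := by
    rw [ContinuousLinearMap.toLinearMap_smul, hilbertSchmidtNorm_smul, Real.norm_eq_abs]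
    gcongr
    exact hJ x
  set K : ℝ := √(finrank ℝ E) * (|Δt| * L)
  have hinj : Function.Injective fun x ↦ x - Δt • w x :=
    injective_id_sub_of_norm_fderiv_le hΔtL (fun x ↦ (hderiv x).differentiableAt) fun x ↦
      (hderiv x).fderiv ▸ (norm_le_sqrt_finrank_mul_hilbertSchmidtNorm _).trans (hHS x)
  have hdet (x) : 1 - K ≤ |(ContinuousLinearMap.id ℝ E - Δt • fderiv ℝ w x).det| :=
    (sub_le_sub_left (hHS x) 1).trans (one_sub_sqrt_finrank_mul_hilbertSchmidtNorm_le_norm_det _)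
  have hchange : ENNReal.ofReal (1 - K) * ∫⁻ x in Set.univ, g (x - Δt • w x) ∂μ ≤
      ∫⁻ y in (fun x ↦ x - Δt • w x) '' Set.univ, g y ∂μ :=
    ofReal_mul_setLIntegral_comp_le_setLIntegral_image μ MeasurableSet.univ
      (fun x _ ↦ ((hasFDerivAt_id x).sub (hderiv x)).hasFDerivWithinAt) hinj.injOn
      (fun x _ ↦ hdet x) g
  have hpos : 0 < 1 - K := sub_pos.2 hΔtL
  rw [ENNReal.ofReal_inv_of_pos hpos,
    ← ENNReal.mul_le_iff_le_inv (ENNReal.ofReal_pos.2 hpos).ne' ENNReal.ofReal_ne_top]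
  simpa only [Measure.restrict_univ] using hchange.trans (setLIntegral_le_lintegral _ _)

end ChangeOfVariables

theorem jacobianFrobeniusNorm_eq_hilbertSchmidtNorm {d m : ℕ}
    (f : EuclideanSpace ℝ (Fin d) → EuclideanSpace ℝ (Fin m)) (x : EuclideanSpace ℝ (Fin d)) :
    jacobianFrobeniusNorm f x =
      hilbertSchmidtNorm
        (fderiv ℝ f x : EuclideanSpace ℝ (Fin d) →ₗ[ℝ] EuclideanSpace ℝ (Fin m)) := by
  rw [hilbertSchmidtNorm_eq_sqrt_sum _ (EuclideanSpace.basisFun (Fin d) ℝ), jacobianFrobeniusNorm,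
    Finset.sum_comm]
  simp [EuclideanSpace.real_norm_sq_eq]

theorem sqrt_natCast_mul_le_half {d : ℕ} (hd : d ≤ 4) {r : ℝ} (hr : r ≤ 1 / 4) :
    √d * r ≤ 1 / 2 := by
  have hsqrt : √d ≤ 2 := Real.sqrt_le_iff.2 ⟨by norm_num, by norm_num; exact_mod_cast hd⟩
  calc √d * r ≤ √d * (1 / 4) := by gcongr
    _ ≤ 2 * (1 / 4) := by gcongr
    _ = 1 / 2 := by norm_num

theorem ofReal_inv_one_sub_le_two {t : ℝ} (ht : t ≤ 1 / 2) : ENNReal.ofReal (1 - t)⁻¹ ≤ 2 := by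
  rw [ENNReal.ofReal_le_ofNat]
  exact inv_le_of_inv_le₀ two_pos (by linarith)

/-- If `Δt·L ≤ 1/4` and `w` is everywhere differentiable with Jacobian Frobenius norm
at most `L`, then the integral of `g(x - Δt·w(x))` is at most twice that of `g`. -/
theorem lintegral_comp_characteristic_le (d : ℕ) (hd : d = 2 ∨ d = 3)
    (Δt L : ℝ) (hΔt : 0 < Δt) (hL : 0 ≤ L) (hΔtL : Δt * L ≤ 1 / 4)
    (w : EuclideanSpace ℝ (Fin d) → EuclideanSpace ℝ (Fin d))
    (hw : Differentiable ℝ w)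
    (hJ : ∀ x, jacobianFrobeniusNorm w x ≤ L)
    (g : EuclideanSpace ℝ (Fin d) → ENNReal) (hg : Measurable g) :
    ∫⁻ x, g (x - Δt • w x) ≤ 2 * ∫⁻ y, g y := by
  have hhalf : √(finrank ℝ (EuclideanSpace ℝ (Fin d))) * (|Δt| * L) ≤ 1 / 2 := by
    rw [finrank_euclideanSpace_fin, abs_of_pos hΔt]
    exact sqrt_natCast_mul_le_half (by lia) hΔtL
  refine (lintegral_comp_characteristic_le_general volume (hhalf.trans_lt (by norm_num)) hw
    (fun x ↦ jacobianFrobeniusNorm_eq_hilbertSchmidtNorm w x ▸ hJ x) g).trans ?_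
  gcongr
  exact ofReal_inv_one_sub_le_two hhalf
end

section
/- Let d = 2 or d = 3. There exists a constant c > 0, depending only on d, with the following property: for all Δt > 0 and L ≥ 0 with Δt·L ≤ 1/4, for every everywhere-differentiable map w : ℝ^d → ℝ^d whose Jacobian matrix has Frobenius norm at most L at every point, and for every measurable v : ℝ^d → ℝ^m, one has ∫_{ℝ^d} ‖v(x − Δt·w(x))‖² dx ≤ (1 + c·L·Δt) · ∫_{ℝ^d} ‖v(y)‖² dy, where the integrals are with respect to Lebesgue measure. -/
/-!
Since `w` is `L`-Lipschitz, `x ↦ x - Δt • w x` expands distances by a factor of at least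
`1 - Δt * L`. It is therefore injective, and preimages of sets under it have measure at most
`(1 - Δt * L)⁻¹ ^ d` times that of the set, by comparison with Hausdorff measure. Bernoulli's
inequality makes this factor `1 + O(Δt * L)`, so no change of variables is needed.
-/

open MeasureTheory

open scoped ENNReal NNReal

theorem opNorm_le_sqrt_sum_sq_norm {𝕜 E F ι : Type*} [RCLike 𝕜] [NormedAddCommGroup E]
    [InnerProductSpace 𝕜 E] [SeminormedAddCommGroup F] [NormedSpace 𝕜 F] [Fintype ι]
    (b : OrthonormalBasis ι 𝕜 E) (A : E →L[𝕜] F) : ‖A‖ ≤ √(∑ i, ‖A (b i)‖ ^ 2) := by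
  refine A.opNorm_le_bound (Real.sqrt_nonneg _) fun x ↦ ?_
  calc ‖A x‖ = ‖∑ i, inner 𝕜 (b i) x • A (b i)‖ := by
        conv_lhs => rw [← b.sum_repr' x, map_sum]
        simp only [map_smul]
    _ ≤ ∑ i, ‖A (b i)‖ * ‖inner 𝕜 (b i) x‖ :=
        norm_sum_le_of_le _ fun i _ ↦ by rw [norm_smul, mul_comm]
    _ ≤ √(∑ i, ‖A (b i)‖ ^ 2) * √(∑ i, ‖inner 𝕜 (b i) x‖ ^ 2) :=
        Real.sum_mul_le_sqrt_mul_sqrt _ _ _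
    _ = √(∑ i, ‖A (b i)‖ ^ 2) * ‖x‖ := by
        rw [b.sum_sq_norm_inner_right, Real.sqrt_sq (norm_nonneg x)]

theorem norm_fderiv_le_jacobianFrobeniusNorm {d m : ℕ}
    (f : EuclideanSpace ℝ (Fin d) → EuclideanSpace ℝ (Fin m)) (x : EuclideanSpace ℝ (Fin d)) :
    ‖fderiv ℝ f x‖ ≤ jacobianFrobeniusNorm f x := by
  have h := opNorm_le_sqrt_sum_sq_norm (EuclideanSpace.basisFun (Fin d) ℝ) (fderiv ℝ f x)
  simp only [EuclideanSpace.basisFun_apply, EuclideanSpace.real_norm_sq_eq] at h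
  rwa [Finset.sum_comm] at h

theorem lipschitzWith_of_jacobianFrobeniusNorm_le {d m : ℕ}
    {f : EuclideanSpace ℝ (Fin d) → EuclideanSpace ℝ (Fin m)} (hf : Differentiable ℝ f)
    {L : ℝ≥0} (hL : ∀ x, jacobianFrobeniusNorm f x ≤ L) : LipschitzWith L f :=
  lipschitzWith_of_nnnorm_fderiv_le hf fun x ↦
    (norm_fderiv_le_jacobianFrobeniusNorm f x).trans (hL x)

theorem antilipschitzWith_id_sub {E : Type*} [SeminormedAddCommGroup E] {u : E → E} {K : ℝ≥0}
    (hu : LipschitzWith K u) (hK : K < 1) : AntilipschitzWith (1 - K)⁻¹ fun x ↦ x - u x := by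
  simpa [sub_eq_add_neg] using AntilipschitzWith.id.add_lipschitzWith hu.neg (by simpa using hK)

theorem exists_pos_forall_inv_one_sub_pow_le {𝕜 : Type*} [Field 𝕜] [LinearOrder 𝕜]
    [IsStrictOrderedRing 𝕜] (n : ℕ) {r : 𝕜} (hr : r < 1) :
    ∃ c, 0 < c ∧ ∀ a, 0 ≤ a → a ≤ r → (1 - a)⁻¹ ^ n ≤ 1 + c * a := by
  have : 0 < 1 - r := sub_pos.2 hr
  refine ⟨n * (1 - r)⁻¹ ^ n + 1, by positivity, fun a ha har ↦ ?_⟩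
  have ha' : 0 < 1 - a := by linarith
  have bernoulli : 1 + n * -a ≤ (1 - a) ^ n := by
    simpa using one_add_mul_sub_le_pow (a := 1 - a) (by linarith) n
  have mono : (1 - a)⁻¹ ^ n ≤ (1 - r)⁻¹ ^ n := by gcongr
  calc (1 - a)⁻¹ ^ n = (1 - a)⁻¹ ^ n * (1 + n * -a) + n * (1 - a)⁻¹ ^ n * a := by ring
    _ ≤ (1 - a)⁻¹ ^ n * (1 - a) ^ n + n * (1 - r)⁻¹ ^ n * a := by gcongr
    _ = 1 + n * (1 - r)⁻¹ ^ n * a := by rw [← mul_pow, inv_mul_cancel₀ ha'.ne', one_pow]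
    _ ≤ 1 + (n * (1 - r)⁻¹ ^ n + 1) * a := by linarith

section AddHaar

variable {E : Type*} [NormedAddCommGroup E] [NormedSpace ℝ E] [FiniteDimensional ℝ E]
  [MeasurableSpace E] [BorelSpace E]

theorem addHaar_preimage_le_of_antilipschitzWith (μ : Measure E) [μ.IsAddHaarMeasure] {K : ℝ≥0}
    {f : E → E} (hf : AntilipschitzWith K f) (s : Set E) :
    μ (f ⁻¹' s) ≤ (K : ℝ≥0∞) ^ Module.finrank ℝ E * μ s := by
  rw [Measure.isAddLeftInvariant_eq_smul μ (Measure.hausdorffMeasure (Module.finrank ℝ E))]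
  have h := hf.hausdorffMeasure_preimage_le (d := Module.finrank ℝ E) (Nat.cast_nonneg _) s
  rw [ENNReal.rpow_natCast] at h
  simp only [Measure.smul_apply, ENNReal.smul_def, smul_eq_mul]
  rw [mul_left_comm]
  gcongr

theorem lintegral_comp_le_of_antilipschitzWith (μ : Measure E) [μ.IsAddHaarMeasure] {K : ℝ≥0}
    {f : E → E} (hf : AntilipschitzWith K f) (hfm : Measurable f) (g : E → ℝ≥0∞) :
    ∫⁻ x, g (f x) ∂μ ≤ (K : ℝ≥0∞) ^ Module.finrank ℝ E * ∫⁻ y, g y ∂μ := by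
  have : ProperSpace E := FiniteDimensional.proper ℝ E
  have map_le : μ.map f ≤ (K : ℝ≥0∞) ^ Module.finrank ℝ E • μ := Measure.le_iff.2 fun s hs ↦ by
    rw [Measure.map_apply hfm hs]
    exact addHaar_preimage_le_of_antilipschitzWith μ hf s
  -- Lusin–Souslin: an injective Borel map between Polish spaces is a measurable embedding.
  calc ∫⁻ x, g (f x) ∂μ = ∫⁻ y, g y ∂(μ.map f) :=
        ((hfm.measurableEmbedding hf.injective).lintegral_map g).symm
    _ ≤ ∫⁻ y, g y ∂((K : ℝ≥0∞) ^ Module.finrank ℝ E • μ) := lintegral_mono' map_le le_rfl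
    _ = (K : ℝ≥0∞) ^ Module.finrank ℝ E * ∫⁻ y, g y ∂μ := by
        rw [lintegral_smul_measure, smul_eq_mul]

theorem lintegral_comp_id_sub_le (μ : Measure E) [μ.IsAddHaarMeasure] {K : ℝ≥0} {u : E → E}
    (hu : LipschitzWith K u) (hK : K < 1) (g : E → ℝ≥0∞) :
    ∫⁻ x, g (x - u x) ∂μ ≤
      ENNReal.ofReal ((1 - (K : ℝ))⁻¹ ^ Module.finrank ℝ E) * ∫⁻ y, g y ∂μ := by
  have hmeas : Measurable fun x ↦ x - u x := (continuous_id.sub hu.continuous).measurable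
  convert lintegral_comp_le_of_antilipschitzWith μ (antilipschitzWith_id_sub hu hK) hmeas g
  rw [← ENNReal.coe_pow, ← ENNReal.ofReal_coe_nnreal]
  push_cast [hK.le]
  rfl

theorem exists_const_sq_norm_comp_le_general (E : Type*) [NormedAddCommGroup E] [NormedSpace ℝ E]
    [FiniteDimensional ℝ E] [MeasurableSpace E] [BorelSpace E] {r : ℝ} (hr : r < 1) :
    ∃ c : ℝ, 0 < c ∧
      ∀ (μ : Measure E) [μ.IsAddHaarMeasure] (Δt L : ℝ≥0), Δt * L ≤ r →
        ∀ w : E → E, LipschitzWith L w → ∀ g : E → ℝ≥0∞,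
          ∫⁻ x, g (x - (Δt : ℝ) • w x) ∂μ ≤
            ENNReal.ofReal (1 + c * L * Δt) * ∫⁻ y, g y ∂μ := by
  obtain ⟨c, hc, hbound⟩ := exists_pos_forall_inv_one_sub_pow_le (Module.finrank ℝ E) hr
  refine ⟨c, hc, fun μ _ Δt L hΔtL w hw g ↦ ?_⟩
  have hlip : LipschitzWith (Δt * L) fun x ↦ (Δt : ℝ) • w x := by
    simpa [Function.comp_def] using (lipschitzWith_smul (Δt : ℝ)).comp hw
  have hlt : Δt * L < 1 := mod_cast hΔtL.trans_lt hr
  refine (lintegral_comp_id_sub_le μ hlip hlt g).trans ?_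
  gcongr
  calc (1 - ((Δt * L : ℝ≥0) : ℝ))⁻¹ ^ Module.finrank ℝ E ≤ 1 + c * (Δt * L : ℝ≥0) :=
        hbound _ (by positivity) (by simpa using hΔtL)
    _ = 1 + c * L * Δt := by push_cast; ring

end AddHaar

/-- There is a constant `c > 0` depending only on `d` such that
`∫ ‖v(x - Δt·w(x))‖² dx ≤ (1 + c·L·Δt) ∫ ‖v(y)‖² dy` whenever `Δt·L ≤ 1/4` and the
Jacobian of `w` has Frobenius norm at most `L` everywhere. -/
theorem exists_const_sq_norm_comp_le (d : ℕ) (hd : d = 2 ∨ d = 3) :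
    ∃ c : ℝ, 0 < c ∧
      ∀ (m : ℕ) (Δt L : ℝ), 0 < Δt → 0 ≤ L → Δt * L ≤ 1 / 4 →
        ∀ w : EuclideanSpace ℝ (Fin d) → EuclideanSpace ℝ (Fin d),
          Differentiable ℝ w → (∀ x, jacobianFrobeniusNorm w x ≤ L) →
          ∀ v : EuclideanSpace ℝ (Fin d) → EuclideanSpace ℝ (Fin m),
            Measurable v →
            ∫⁻ x, (‖v (x - Δt • w x)‖₊ : ENNReal) ^ 2 ≤
              ENNReal.ofReal (1 + c * L * Δt) * ∫⁻ y, (‖v y‖₊ : ENNReal) ^ 2 := by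
  obtain ⟨c, hc, hbound⟩ := exists_const_sq_norm_comp_le_general (EuclideanSpace ℝ (Fin d))
    (r := 1 / 4) (by norm_num)
  exact ⟨c, hc, fun m Δt L hΔt hL hΔtL w hw hJ v _ ↦ hbound volume ⟨Δt, hΔt.le⟩ ⟨L, hL⟩ hΔtL w
    (lipschitzWith_of_jacobianFrobeniusNorm_le hw hJ) fun y ↦ (‖v y‖₊ : ℝ≥0∞) ^ 2⟩
end
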